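/- Let m : [−1,1] → ℝ^{N+1} be continuous, α ∈ ℝ^{N+1}, and set f(v) = exp(α·m(v)). Let g : [−1,1] → ℝ be measurable with g ≥ 0 almost everywhere, such that g and g·log g are Lebesgue integrable on [−1,1] (with the convention 0·log 0 = 0). If ∫_{−1}^{1} m_i(v) g(v) dv = ∫_{−1}^{1} m_i(v) f(v) dv for every i = 0, …, N, then ∫_{−1}^{1} (g(v) log g(v) − g(v)) dv ≥ ∫_{−1}^{1} (f(v) log f(v) − f(v)) dv. That is, among all nonnegative densities with the same moments, the exponential-family density f = η_*'(α·m) = exp(α·m) minimizes the Maxwell–Boltzmann entropy functional ⟨η(g)⟩. -/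

import Mathlib

open MeasureTheory

/-!
The Fenchel–Young inequality `y * z - exp y ≤ z * log z - z`, an equality at `z = exp y`, taken at
`y = α·m(v)` and `z = g(v)` and integrated, bounds the entropy of `g` below by
`α·⟨m g⟩ - ⟨exp (α·m)⟩`. This bound depends on `g` only through its moments, and
`g = exp (α·m)` attains it.
-/

lemma mul_sub_exp_le_mul_log_sub {z : ℝ} (hz : 0 ≤ z) (y : ℝ) :
    y * z - Real.exp y ≤ z * Real.log z - z := by
  rcases hz.eq_or_lt with rfl | hz_pos
  · simpa using (Real.exp_pos y).le
  · have tangent_line : z * (y - Real.log z + 1) ≤ Real.exp y := calc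
      z * (y - Real.log z + 1) ≤ z * Real.exp (y - Real.log z) := by
        gcongr
        exact Real.add_one_le_exp _
      _ = Real.exp y := by rw [Real.exp_sub, Real.exp_log hz_pos, mul_div_cancel₀ _ hz_pos.ne']
    linarith

section MeasureSpace

variable {X : Type*} [MeasurableSpace X] {μ : Measure X}

lemma integral_exp_mul_log_sub_le_of_integral_mul_eq {L g : X → ℝ}
    (hexp : Integrable (fun x => Real.exp (L x)) μ)
    (hLexp : Integrable (fun x => L x * Real.exp (L x)) μ)
    (hg_nonneg : 0 ≤ᵐ[μ] g) (hLg : Integrable (fun x => L x * g x) μ)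
    (hg_entropy : Integrable (fun x => g x * Real.log (g x) - g x) μ)
    (hL : ∫ x, L x * g x ∂μ = ∫ x, L x * Real.exp (L x) ∂μ) :
    ∫ x, (Real.exp (L x) * Real.log (Real.exp (L x)) - Real.exp (L x)) ∂μ
      ≤ ∫ x, (g x * Real.log (g x) - g x) ∂μ := calc
  ∫ x, (Real.exp (L x) * Real.log (Real.exp (L x)) - Real.exp (L x)) ∂μ
      = ∫ x, (L x * Real.exp (L x) - Real.exp (L x)) ∂μ := by
        simp only [Real.log_exp, mul_comm]
  _ = ∫ x, (L x * g x - Real.exp (L x)) ∂μ := by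
        rw [integral_sub hLexp hexp, integral_sub hLg hexp, hL]
  _ ≤ ∫ x, (g x * Real.log (g x) - g x) ∂μ := by
        refine integral_mono_ae (hLg.sub hexp) hg_entropy ?_
        filter_upwards [hg_nonneg] with x hx using mul_sub_exp_le_mul_log_sub hx (L x)

section Moments

variable {ι 𝕜 : Type*} [RCLike 𝕜] {s : Finset ι} {m : X → ι → 𝕜} {h : X → 𝕜}

lemma integrable_sum_mul_mul (α : ι → 𝕜) (hmh : ∀ i ∈ s, Integrable (fun x => m x i * h x) μ) :
    Integrable (fun x => (∑ i ∈ s, α i * m x i) * h x) μ := by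
  simp_rw [Finset.sum_mul, mul_assoc]
  exact integrable_finsetSum _ fun i hi => (hmh i hi).const_mul (α i)

lemma integral_sum_mul_mul (α : ι → 𝕜) (hmh : ∀ i ∈ s, Integrable (fun x => m x i * h x) μ) :
    ∫ x, (∑ i ∈ s, α i * m x i) * h x ∂μ = ∑ i ∈ s, α i * ∫ x, m x i * h x ∂μ := by
  simp_rw [Finset.sum_mul, mul_assoc]
  rw [integral_finsetSum _ fun i hi => (hmh i hi).const_mul (α i)]
  simp_rw [integral_const_mul]

end Moments

theorem exp_family_minimizes_entropy_general {ι : Type*} {s : Finset ι} {m : X → ι → ℝ}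
    {α : ι → ℝ} {g : X → ℝ}
    (hf : Integrable (fun x => Real.exp (∑ i ∈ s, α i * m x i)) μ)
    (hmf : ∀ i ∈ s, Integrable (fun x => m x i * Real.exp (∑ j ∈ s, α j * m x j)) μ)
    (hg_nonneg : 0 ≤ᵐ[μ] g) (hmg : ∀ i ∈ s, Integrable (fun x => m x i * g x) μ)
    (hg_entropy : Integrable (fun x => g x * Real.log (g x) - g x) μ)
    (hmom : ∀ i ∈ s, ∫ x, m x i * g x ∂μ
      = ∫ x, m x i * Real.exp (∑ j ∈ s, α j * m x j) ∂μ) :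
    ∫ x, (g x * Real.log (g x) - g x) ∂μ
      ≥ ∫ x, (Real.exp (∑ i ∈ s, α i * m x i) * Real.log (Real.exp (∑ i ∈ s, α i * m x i))
          - Real.exp (∑ i ∈ s, α i * m x i)) ∂μ := by
  refine integral_exp_mul_log_sub_le_of_integral_mul_eq hf (integrable_sum_mul_mul α hmf)
    hg_nonneg (integrable_sum_mul_mul α hmg) hg_entropy ?_
  rw [integral_sum_mul_mul α hmg, integral_sum_mul_mul α hmf]
  exact Finset.sum_congr rfl fun i hi => by rw [hmom i hi]

end MeasureSpace

lemma integrableOn_exp_sum_mul {X ι : Type*} [TopologicalSpace X] [MeasurableSpace X]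
    [OpensMeasurableSpace X] {μ : Measure X} [IsFiniteMeasureOnCompacts μ] {K : Set X}
    (hK : IsCompact K) (hK_meas : MeasurableSet K) {s : Finset ι} {m : X → ι → ℝ}
    (hm : ∀ i ∈ s, ContinuousOn (fun x => m x i) K) (α : ι → ℝ) :
    IntegrableOn (fun x => Real.exp (∑ i ∈ s, α i * m x i)) K μ :=
  (continuousOn_finsetSum s fun i hi => (hm i hi).const_mul (α i)).rexp.integrableOn_compact' hK
    hK_meas

/-- Minimality of the exponential-family ansatz for the Maxwell–Boltzmann
entropy closure: if a nonnegative density `g` on `[-1,1]` has the same moments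
(with respect to a continuous basis `m`) as `f = exp(α·m)`, then the entropy
`⟨g log g − g⟩` of `g` is at least the entropy of `f`. -/
theorem exp_family_minimizes_entropy (N : ℕ) (m : ℝ → Fin (N + 1) → ℝ)
    (hm : ∀ i, ContinuousOn (fun v => m v i) (Set.Icc (-1 : ℝ) 1))
    (α : Fin (N + 1) → ℝ) (f : ℝ → ℝ)
    (hf : f = fun v => Real.exp (∑ i, α i * m v i))
    (g : ℝ → ℝ) (hg_meas : Measurable g)
    (hg_nonneg : ∀ᵐ v ∂(volume.restrict (Set.Icc (-1 : ℝ) 1)), 0 ≤ g v)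
    (hg_int : IntegrableOn g (Set.Icc (-1 : ℝ) 1))
    (hglogg_int : IntegrableOn (fun v => g v * Real.log (g v)) (Set.Icc (-1 : ℝ) 1))
    (hmom : ∀ i, ∫ v in Set.Icc (-1 : ℝ) 1, m v i * g v
      = ∫ v in Set.Icc (-1 : ℝ) 1, m v i * f v) :
    ∫ v in Set.Icc (-1 : ℝ) 1, (g v * Real.log (g v) - g v)
      ≥ ∫ v in Set.Icc (-1 : ℝ) 1, (f v * Real.log (f v) - f v) := by
  subst hf
  have hf_int := integrableOn_exp_sum_mul (μ := volume) isCompact_Icc measurableSet_Icc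
    (s := Finset.univ) (fun i _ => hm i) α
  exact exp_family_minimizes_entropy_general hf_int
    (fun i _ => hf_int.continuousOn_mul (hm i) isCompact_Icc) hg_nonneg
    (fun i _ => hg_int.continuousOn_mul (hm i) isCompact_Icc) (hglogg_int.sub hg_int)
    fun i _ => hmom i
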